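/- Let C be a Weyl candidate on Minkowski space V with electric part E = E(C) and magnetic part B = B(C) with respect to a unit timelike vector n, let h be the spatial metric, let A = E_{μν}E^{μν} − B_{μν}B^{μν} and 𝖡 = 2E^{μν}B_{μν}, and let α, β be arbitrary real numbers. Define G_{μνλρ} = η_{μλ}η_{νρ} − η_{μρ}η_{νλ}. Then the 4-linear form ℛ_{μνλρ} := ½ C^{στ}_{ μν} C_{στλρ} + α C_{μνλρ} + β (C*)_{μνλρ} − (1/3)(A G_{μνλρ} − 𝖡 η_{μνλρ}) vanishes identically if and only if both spatial symmetric tensors 𝔞_{μν} := −B_{μ}^{ λ}B_{νλ} + E_{μ}^{ λ}E_{νλ} − (1/3)A h_{μν} − α E_{μν} − β B_{μν} and 𝔟_{μν} := B_{μ}^{ λ}E_{νλ} + B_{ν}^{ λ}E_{μλ} − (1/3)𝖡 h_{μν} − α B_{μν} + β E_{μν} vanish identically. -/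

import Mathlib

noncomputable section

/-- Minkowski space `V = ℝ⁴`. -/
abbrev V4 : Type := Fin 4 → ℝ

/-- The Minkowski bilinear form of signature `(-,+,+,+)`. -/
def η (x y : V4) : ℝ := -(x 0 * y 0) + x 1 * y 1 + x 2 * y 2 + x 3 * y 3

/-- The standard basis of `V4`. -/
def e4 (a : Fin 4) : V4 := Pi.single a 1

/-- Components of the Minkowski metric `diag(-1,1,1,1)` (its own inverse). -/
def ηm (a b : Fin 4) : ℝ := if a = b then (if a = (0 : Fin 4) then -1 else 1) else 0

/-- A 4-linear form on `V4`, given by its components in the standard basis. -/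
abbrev T4 : Type := Fin 4 → Fin 4 → Fin 4 → Fin 4 → ℝ

/-- A bilinear form on `V4`, given by its components in the standard basis. -/
abbrev T2 : Type := Fin 4 → Fin 4 → ℝ

/-- Evaluation of a 4-linear form (given by components) on vectors. -/
def eval4 (W : T4) (x y z w : V4) : ℝ :=
  ∑ a : Fin 4, ∑ b : Fin 4, ∑ c : Fin 4, ∑ d : Fin 4, W a b c d * x a * y b * z c * w d

/-- The alternating volume 4-form with `vol(e₀,e₁,e₂,e₃) = 1`. -/
def volv (x y z w : V4) : ℝ := Matrix.det (Matrix.of ![x, y, z, w])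

/-- Components `η_{αβγδ}` of the volume form. -/
def volc (a b c d : Fin 4) : ℝ := volv (e4 a) (e4 b) (e4 c) (e4 d)

/-- Left dual `(*W)_{μνλρ} = ½ η_{μν}{}^{αβ} W_{αβλρ}`. -/
def leftDual (W : T4) : T4 := fun μ ν lam ρ =>
  (1/2) * ∑ γ : Fin 4, ∑ δ : Fin 4, ∑ a : Fin 4, ∑ b : Fin 4,
    volc μ ν γ δ * ηm γ a * ηm δ b * W a b lam ρ

/-- Right dual `(W*)_{μνλρ} = ½ W_{μν}{}^{αβ} η_{αβλρ}`. -/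
def rightDual (W : T4) : T4 := fun μ ν lam ρ =>
  (1/2) * ∑ γ : Fin 4, ∑ δ : Fin 4, ∑ a : Fin 4, ∑ b : Fin 4,
    W μ ν a b * ηm a γ * ηm b δ * volc γ δ lam ρ

/-- A Weyl candidate: pair antisymmetries, pair exchange, first Bianchi, trace-free. -/
def IsWeyl (W : T4) : Prop :=
  (∀ x y z w : V4, eval4 W x y z w = - eval4 W y x z w) ∧
  (∀ x y z w : V4, eval4 W x y z w = - eval4 W x y w z) ∧
  (∀ x y z w : V4, eval4 W x y z w = eval4 W z w x y) ∧
  (∀ x y z w : V4, eval4 W x y z w + eval4 W x z w y + eval4 W x w y z = 0) ∧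
  (∀ x y : V4, ∑ a : Fin 4, ∑ b : Fin 4, ηm a b * eval4 W (e4 a) x (e4 b) y = 0)

/-- Electric part `E(W)_{ab} = W(e_a, n, e_b, n)`. -/
def Epart (W : T4) (n : V4) : T2 := fun a b => eval4 W (e4 a) n (e4 b) n

/-- Magnetic part `B(W)_{ab} = (W*)(e_a, n, e_b, n)`. -/
def Bpart (W : T4) (n : V4) : T2 := fun a b => eval4 (rightDual W) (e4 a) n (e4 b) n

/-- Raise both indices of a bilinear form's components. -/
def up2 (S : T2) : T2 := fun a b => ∑ c : Fin 4, ∑ d : Fin 4, ηm a c * ηm b d * S c d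

/-- Full contraction `S_{ab} T^{ab}`. -/
def contr2 (S T : T2) : ℝ := ∑ a : Fin 4, ∑ b : Fin 4, S a b * up2 T a b

/-- Components of `G_{μνλρ} = η_{μλ}η_{νρ} − η_{μρ}η_{νλ}`. -/
def Gc : T4 := fun μ ν lam ρ => ηm μ lam * ηm ν ρ - ηm μ ρ * ηm ν lam

/-! A symmetric double 2-form whose left and right Hodge duals agree is determined by its electric
and magnetic parts with respect to any non-null `n`: this follows from the identity
`½ η(n, n) F_{στ} H^{στ} = η(F(·, n), H(·, n)) - η((*F)(·, n), (*H)(·, n))` for 2-forms by taking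
`H = G(e_a, e_b, ·, ·)`, which turns the left side into a multiple of `F_{ab}`. Trace-freeness makes
a Weyl candidate `C` such a form, and `C*`, `G`, the volume form and `½ C·C` are as well; hence so
is `ℛ`. Applied with `F = C(e_a, n, ·, ·)` and `H = C(e_c, n, ·, ·)` or its dual, the same identity
computes the electric and magnetic parts of `½ C·C`, so that those of `ℛ` are `-𝔞` and `-𝔟`. -/

/-- Antisymmetry of the components of a bilinear form, i.e. being a 2-form. -/
def IsTwoForm (F : T2) : Prop := ∀ a b, F a b = -F b a

/-- The rows `e_a, e_b, e_c, e_d` select rows of the Vandermonde matrix of `0, 1, 2, 3`, whose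
determinant is `12`. -/
theorem volc_eq_vandermonde (a b c d : Fin 4) :
    volc a b c d =
      ((b : ℝ) - a) * (c - a) * (d - a) * (c - b) * (d - b) * (d - c) / 12 := by
  have hselect : Matrix.of ![e4 a, e4 b, e4 c, e4 d] *
      Matrix.vandermonde (fun i : Fin 4 => (i : ℝ)) = Matrix.vandermonde ![(a : ℝ), b, c, d] := by
    ext i j
    fin_cases i <;> simp [Matrix.mul_apply, Matrix.vandermonde_apply, e4, Pi.single_apply]
  have hIoi : Finset.Ioi (0 : Fin 4) = {1, 2, 3} ∧ Finset.Ioi (1 : Fin 4) = {2, 3} ∧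
      Finset.Ioi (2 : Fin 4) = {3} ∧ Finset.Ioi (3 : Fin 4) = ∅ := by decide
  have hdet : (Matrix.vandermonde (fun i : Fin 4 => (i : ℝ))).det = 12 := by
    simp [Matrix.det_vandermonde, Fin.prod_univ_four, hIoi]
    norm_num
  have hdet_select : (Matrix.vandermonde ![(a : ℝ), b, c, d]).det =
      ((b : ℝ) - a) * (c - a) * (d - a) * (c - b) * (d - b) * (d - c) := by
    simp [Matrix.det_vandermonde, Fin.prod_univ_four, hIoi, mul_assoc]
  rw [eq_div_iff (by norm_num), ← hdet_select, ← hselect, Matrix.det_mul, hdet, volc, volv]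

theorem volc_swap_left (a b c d : Fin 4) : volc a b c d = -volc b a c d := by
  simp only [volc_eq_vandermonde]
  ring

theorem volc_pair_symm (a b c d : Fin 4) : volc a b c d = volc c d a b := by
  simp only [volc_eq_vandermonde]
  ring

theorem ηm_comm (a b : Fin 4) : ηm a b = ηm b a := by
  by_cases hab : a = b
  · rw [hab]
  · simp [ηm, hab, Ne.symm hab]

theorem η_eq_sum (v w : V4) : η v w = ∑ a, ∑ b, ηm a b * v b * w a := by
  simp [η, ηm, Fin.sum_univ_four]

theorem η_comm (v w : V4) : η v w = η w v := by
  simp only [η]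
  ring

theorem η_neg_right (v w : V4) : η v (-w) = -η v w := by
  simp only [η, Pi.neg_apply]
  ring

theorem contr2_eq_sum (F H : T2) :
    contr2 F H = ∑ a, ∑ b, ηm a a * ηm b b * F a b * H a b := by
  simp [contr2, up2, ηm, Fin.sum_univ_four]

theorem contr2_comm (F H : T2) : contr2 F H = contr2 H F := by
  simp only [contr2_eq_sum, mul_right_comm]

/-- The contraction `F_{στ} H^{στ}` as a bilinear form on the space of bilinear forms. -/
def contrBilin : LinearMap.BilinForm ℝ T2 :=
  LinearMap.mk₂ ℝ contr2
    (fun _ _ _ => by simp [contr2, add_mul, Finset.sum_add_distrib])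
    (fun _ _ _ => by simp [contr2, mul_assoc, Finset.mul_sum])
    (fun _ _ _ => by simp [contr2_eq_sum, mul_add, Finset.sum_add_distrib])
    (fun _ _ _ => by simp [contr2_eq_sum, mul_left_comm, Finset.mul_sum])

theorem contrBilin_apply (F H : T2) : contrBilin F H = contr2 F H := rfl

/-- The Hodge dual `½ F^{στ} η_{στλρ}` of a bilinear form. Symmetric forms are sent to `0`. -/
def hodge : T2 →ₗ[ℝ] T2 where
  toFun F c d := 1 / 2 * contr2 F (volc c d)
  map_add' F H := by
    ext c d
    simp [← contrBilin_apply, mul_add]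
  map_smul' r F := by
    ext c d
    simp [← contrBilin_apply, mul_left_comm]

theorem hodge_apply (F : T2) (c d : Fin 4) : hodge F c d = 1 / 2 * contr2 F (volc c d) := rfl

theorem isTwoForm_hodge (F : T2) : IsTwoForm (hodge F) := fun c d => by
  have hswap : volc c d = -volc d c := funext₂ (volc_swap_left c d)
  rw [hodge_apply, hodge_apply, hswap, ← contrBilin_apply, map_neg, contrBilin_apply, mul_neg]

theorem IsTwoForm.apply_self {F : T2} (hF : IsTwoForm F) (a : Fin 4) : F a a = 0 := by
  linarith [hF a a]

theorem IsTwoForm.ext_of_lt {F H : T2} (hF : IsTwoForm F) (hH : IsTwoForm H)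
    (h : ∀ a b, a < b → F a b = H a b) : F = H := by
  ext a b
  obtain hab | rfl | hba := lt_trichotomy a b
  · exact h a b hab
  · rw [hF.apply_self, hH.apply_self]
  · rw [hF, hH, h b a hba]

theorem IsTwoForm.hodge_eq {F : T2} (hF : IsTwoForm F) :
    hodge F = ![![0, F 2 3, -F 1 3, F 1 2], ![-F 2 3, 0, -F 0 3, F 0 2],
      ![F 1 3, F 0 3, 0, -F 0 1], ![-F 1 2, -F 0 2, F 0 1, 0]] := by
  ext c d
  fin_cases c <;> fin_cases d <;>
    simp [hodge_apply, contr2_eq_sum, ηm, volc_eq_vandermonde, Fin.sum_univ_four] <;>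
    linarith [hF 0 1, hF 0 2, hF 0 3, hF 1 2, hF 1 3, hF 2 3]

theorem IsTwoForm.hodge_hodge {F : T2} (hF : IsTwoForm F) : hodge (hodge F) = -F := by
  have hneg : IsTwoForm (-F) := fun a b => congrArg Neg.neg (hF a b)
  refine (isTwoForm_hodge _).ext_of_lt hneg fun a b hab => ?_
  rw [(isTwoForm_hodge F).hodge_eq, hF.hodge_eq]
  fin_cases a <;> fin_cases b <;> simp at hab ⊢

theorem IsTwoForm.contr2_eq {F H : T2} (hF : IsTwoForm F) (hH : IsTwoForm H) :
    contr2 F H = 2 * (F 1 2 * H 1 2 + F 1 3 * H 1 3 + F 2 3 * H 2 3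
      - F 0 1 * H 0 1 - F 0 2 * H 0 2 - F 0 3 * H 0 3) := by
  simp only [contr2_eq_sum, ηm, ↓reduceIte, Fin.isValue, mul_ite, mul_neg, mul_one, ite_mul,
    neg_mul, one_mul, Fin.sum_univ_four, one_ne_zero, Fin.reduceEq, hF.apply_self, zero_mul,
    hF 1 0, hH 1 0, hF 2 0, hH 2 0, hF 2 1, hH 2 1, hF 3 0, hH 3 0, hF 3 1, hH 3 1, hF 3 2, hH 3 2]
  ring

theorem IsTwoForm.contr2_hodge_left {F H : T2} (hF : IsTwoForm F) (hH : IsTwoForm H) :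
    contr2 (hodge F) H = contr2 F (hodge H) := by
  rw [(isTwoForm_hodge F).contr2_eq hH, hF.contr2_eq (isTwoForm_hodge H), hF.hodge_eq,
    hH.hodge_eq]
  simp only [Matrix.cons_val', Matrix.cons_val, Matrix.cons_val_fin_one, Matrix.cons_val_one,
    Matrix.cons_val_zero, Fin.isValue]
  ring

/-- The covector `F(·, n)`, the electric field of a 2-form `F` seen by an observer `n`. -/
def contrRight (F : T2) (n : V4) : V4 := fun a => ∑ b, F a b * n b

/-- Polarized form of `F_{στ}F^{στ} = 2(|𝐁|² - |𝐄|²)` for the electromagnetic field `F`. -/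
theorem IsTwoForm.η_mul_contr2 {F H : T2} (hF : IsTwoForm F) (hH : IsTwoForm H) (n : V4) :
    η n n * (1 / 2 * contr2 F H) =
      η (contrRight F n) (contrRight H n)
        - η (contrRight (hodge F) n) (contrRight (hodge H) n) := by
  rw [hF.contr2_eq hH, hF.hodge_eq, hH.hodge_eq]
  simp only [η, Fin.isValue, contrRight, Fin.sum_univ_four, hF.apply_self, hH.apply_self, hF 1 0,
    hH 1 0, hF 2 0, hF 2 1, hH 2 0, hH 2 1, hF 3 0, hF 3 1, hF 3 2, hH 3 0, hH 3 1, hH 3 2,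
    Matrix.cons_val', Matrix.cons_val_fin_one, Matrix.cons_val_zero, Matrix.cons_val_one,
    Matrix.cons_val]
  ring

theorem isTwoForm_Gc (a b : Fin 4) : IsTwoForm (Gc a b) := fun c d => by
  simp only [Gc]
  ring

theorem IsTwoForm.contr2_Gc {F : T2} (hF : IsTwoForm F) (a b : Fin 4) :
    contr2 F (Gc a b) = 2 * F a b := by
  rw [hF.contr2_eq (isTwoForm_Gc a b)]
  fin_cases a <;> fin_cases b <;> simp [Gc, ηm, hF.apply_self] <;>
    linarith [hF 0 1, hF 0 2, hF 0 3, hF 1 2, hF 1 3, hF 2 3]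

theorem hodge_Gc (a b : Fin 4) : hodge (Gc a b) = volc a b := by
  have hvol : ∀ c d, IsTwoForm (volc c d) := fun c d σ τ => by
    rw [volc_pair_symm, volc_swap_left, volc_pair_symm]
  ext c d
  rw [hodge_apply, contr2_comm, (hvol c d).contr2_Gc, volc_pair_symm]
  ring

theorem IsTwoForm.eq_zero_of_contrRight_eq_zero {F : T2} (hF : IsTwoForm F) {n : V4}
    (hn : η n n ≠ 0) (helectric : contrRight F n = 0) (hmagnetic : contrRight (hodge F) n = 0) :
    F = 0 := by
  ext a b
  have hzero := hF.η_mul_contr2 (isTwoForm_Gc a b) n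
  rw [helectric, hmagnetic, hF.contr2_Gc] at hzero
  have hη : ∀ v, η 0 v = 0 := fun v => by simp [η]
  simpa [hη, hn] using hzero

/-- The right dual as a linear map: the Hodge dual in the last two indices. -/
def rightDualₗ : T4 →ₗ[ℝ] T4 := (hodge.compLeft (Fin 4)).compLeft (Fin 4)

theorem rightDualₗ_apply (W : T4) (a b : Fin 4) : rightDualₗ W a b = hodge (W a b) := rfl

theorem rightDual_eq_rightDualₗ (W : T4) : rightDual W = rightDualₗ W := by
  ext a b c d
  simp [rightDual, rightDualₗ_apply, hodge_apply, contr2_eq_sum, volc_pair_symm c d, ηm,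
    Fin.sum_univ_four]

theorem rightDualₗ_Gc : rightDualₗ Gc = volc := funext₂ hodge_Gc

/-- Symmetric double 2-forms whose left and right Hodge duals agree. Weyl candidates, `G` and the
volume form are of this kind, and it is all that the equation `ℛ = 0` needs. -/
structure IsDualSymmetric (W : T4) : Prop where
  isTwoForm (a b : Fin 4) : IsTwoForm (W a b)
  pair_symm (a b c d : Fin 4) : W a b c d = W c d a b
  hodge_symm (a b c d : Fin 4) : hodge (W a b) c d = hodge (W c d) a b

/-- The linear space of dual-symmetric forms. -/
def dualSymmetric : Submodule ℝ T4 where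
  carrier := {W | IsDualSymmetric W}
  zero_mem' :=
    { isTwoForm := fun _ _ _ _ => by simp
      pair_symm := fun _ _ _ _ => rfl
      hodge_symm := fun _ _ _ _ => by simp }
  add_mem' := fun {W Z} hW hZ =>
    { isTwoForm := fun a b c d => by
        simp only [Pi.add_apply, hW.isTwoForm a b c d, hZ.isTwoForm a b c d]
        ring
      pair_symm := fun a b c d => congrArg₂ (· + ·) (hW.pair_symm a b c d) (hZ.pair_symm a b c d)
      hodge_symm := fun a b c d => by
        simp only [Pi.add_apply, map_add, hW.hodge_symm a b c d, hZ.hodge_symm a b c d] }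
  smul_mem' := fun r W hW =>
    { isTwoForm := fun a b c d => by
        simp only [Pi.smul_apply, hW.isTwoForm a b c d, smul_neg]
      pair_symm := fun a b c d => congrArg (r • ·) (hW.pair_symm a b c d)
      hodge_symm := fun a b c d => by
        simp only [Pi.smul_apply, map_smul, hW.hodge_symm a b c d] }

theorem isDualSymmetric_Gc : IsDualSymmetric Gc where
  isTwoForm := isTwoForm_Gc
  pair_symm a b c d := by
    rw [Gc, Gc, ηm_comm a c, ηm_comm b d, ηm_comm a d, ηm_comm b c, mul_comm (ηm d a)]
  hodge_symm a b c d := by rw [hodge_Gc, hodge_Gc, volc_pair_symm]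

theorem isDualSymmetric_rightDualₗ {W : T4} (hW : IsDualSymmetric W) :
    IsDualSymmetric (rightDualₗ W) where
  isTwoForm a b := isTwoForm_hodge (W a b)
  pair_symm := hW.hodge_symm
  hodge_symm a b c d := by
    simp only [rightDualₗ_apply, (hW.isTwoForm _ _).hodge_hodge, Pi.neg_apply, hW.pair_symm a b c d]

theorem IsDualSymmetric.rightDualₗ_rightDualₗ {W : T4} (hW : IsDualSymmetric W) :
    rightDualₗ (rightDualₗ W) = -W :=
  funext₂ fun a b => (hW.isTwoForm a b).hodge_hodge

/-- Composition of double 2-forms viewed as endomorphisms of the space of 2-forms, with the pair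
symmetry of the second one built in: `½ W_{μν}^{στ} Z_{λρστ}`. -/
def doubleComp (W Z : T4) : T4 := fun a b c d => 1 / 2 * contr2 (W a b) (Z c d)

theorem IsDualSymmetric.rightDualₗ_doubleComp {Z : T4} (hZ : IsDualSymmetric Z) (W : T4) :
    rightDualₗ (doubleComp W Z) = doubleComp W (rightDualₗ Z) := by
  ext a b c d
  have hsum : doubleComp W Z a b =
      ∑ σ, ∑ τ, (1 / 2 * (ηm σ σ * ηm τ τ * W a b σ τ)) • Z σ τ := by
    ext c d
    simp only [doubleComp, contr2_eq_sum, Finset.mul_sum, Finset.sum_apply, Pi.smul_apply,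
      smul_eq_mul, hZ.pair_symm c d, mul_assoc]
  simp only [rightDualₗ_apply, hsum, map_sum, map_smul, doubleComp, contr2_eq_sum, Finset.mul_sum,
    Finset.sum_apply, Pi.smul_apply, smul_eq_mul, hZ.hodge_symm c d, mul_assoc]

theorem IsDualSymmetric.doubleComp_self {W : T4} (hW : IsDualSymmetric W) :
    IsDualSymmetric (doubleComp W W) where
  isTwoForm a b c d := by
    have hswap : W c d = -W d c := by
      ext σ τ
      rw [hW.pair_symm, hW.isTwoForm, hW.pair_symm σ τ]
      rfl
    simp only [doubleComp, hswap, ← contrBilin_apply, map_neg, mul_neg]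
  pair_symm a b c d := by rw [doubleComp, doubleComp, contr2_comm]
  hodge_symm a b c d := by
    rw [← rightDualₗ_apply, ← rightDualₗ_apply, hW.rightDualₗ_doubleComp, doubleComp, doubleComp,
      rightDualₗ_apply, rightDualₗ_apply,
      ← (hW.isTwoForm a b).contr2_hodge_left (hW.isTwoForm c d), contr2_comm]

theorem eval4_e4 (W : T4) (a b c d : Fin 4) :
    eval4 W (e4 a) (e4 b) (e4 c) (e4 d) = W a b c d := by
  simp [eval4, e4, Pi.single_apply]

theorem IsWeyl.swap_left {W : T4} (hW : IsWeyl W) (a b c d : Fin 4) :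
    W a b c d = -W b a c d := by
  simpa only [eval4_e4] using hW.1 (e4 a) (e4 b) (e4 c) (e4 d)

theorem IsWeyl.isTwoForm {W : T4} (hW : IsWeyl W) (a b : Fin 4) : IsTwoForm (W a b) :=
  fun c d => by simpa only [eval4_e4] using hW.2.1 (e4 a) (e4 b) (e4 c) (e4 d)

theorem IsWeyl.pair_symm {W : T4} (hW : IsWeyl W) (a b c d : Fin 4) :
    W a b c d = W c d a b := by
  simpa only [eval4_e4] using hW.2.2.1 (e4 a) (e4 b) (e4 c) (e4 d)

theorem IsWeyl.trace {W : T4} (hW : IsWeyl W) (b d : Fin 4) :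
    -W 0 b 0 d + W 1 b 1 d + W 2 b 2 d + W 3 b 3 d = 0 := by
  simpa [eval4_e4, ηm, Fin.sum_univ_four] using hW.2.2.2.2 (e4 b) (e4 d)

/-- In an orthonormal frame the components of the duals with increasing index pairs agree by one
mixed Ricci trace each, or by a combination of the four diagonal ones. -/
theorem IsWeyl.hodge_symm_of_lt {W : T4} (hW : IsWeyl W) {a b c d : Fin 4} (hab : a < b)
    (hcd : c < d) : hodge (W a b) c d = hodge (W c d) a b := by
  have hleft := hW.swap_left
  have hright : ∀ a b c d, W a b c d = -W a b d c := hW.isTwoForm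
  have hpair := hW.pair_symm
  have htrace := hW.trace
  have hself : ∀ a c d, W a a c d = 0 := fun a c d => by linarith [hleft a a c d]
  have hswap : ∀ a b, W b a b a = W a b a b := fun a b => by rw [hleft, hright, neg_neg]
  have htrace00 := htrace 0 0
  have htrace11 := htrace 1 1
  have htrace22 := htrace 2 2
  have htrace33 := htrace 3 3
  simp only [hself, hswap 0 1, hswap 0 2, hswap 0 3, hswap 1 2, hswap 1 3, hswap 2 3]
    at htrace00 htrace11 htrace22 htrace33
  simp only [(hW.isTwoForm _ _).hodge_eq]
  fin_cases a <;> fin_cases b <;> try exact absurd hab (by decide)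
  all_goals
    fin_cases c <;> fin_cases d <;> try exact absurd hcd (by decide)
  all_goals
    simp only [Fin.zero_eta, Fin.isValue, Fin.mk_one, Fin.reduceFinMk, Matrix.cons_val',
      Matrix.cons_val, Matrix.cons_val_fin_one, Matrix.cons_val_zero, Matrix.cons_val_one] <;>
    first
    | linarith only [htrace00, htrace11, htrace22, htrace33]
    | grind

theorem IsWeyl.isDualSymmetric {W : T4} (hW : IsWeyl W) : IsDualSymmetric W where
  isTwoForm := hW.isTwoForm
  pair_symm := hW.pair_symm
  hodge_symm a b c d := by
    have hflip : ∀ c d, IsTwoForm fun a b => hodge (W a b) c d := fun c d a b => by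
      have hswap : W a b = -W b a := funext₂ (hW.swap_left a b)
      simp only [hswap, map_neg, Pi.neg_apply]
    have hcd : ∀ a b, a < b → hodge (W a b) = fun c d => hodge (W c d) a b := fun a b hab =>
      (isTwoForm_hodge (W a b)).ext_of_lt (hflip a b) fun c d hcd => hW.hodge_symm_of_lt hab hcd
    exact congrFun₂ ((hflip c d).ext_of_lt (isTwoForm_hodge (W c d)) fun a b hab =>
      congrFun₂ (hcd a b hab) c d) a b

/-- The electric part with respect to `n` as a linear map. -/
def Epartₗ (n : V4) : T4 →ₗ[ℝ] T2 where
  toFun W := Epart W n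
  map_add' W Z := by
    ext a c
    simp [Epart, eval4, add_mul, Finset.sum_add_distrib]
  map_smul' r W := by
    ext a c
    simp [Epart, eval4, mul_assoc, Finset.mul_sum]

theorem Epartₗ_apply (n : V4) (W : T4) : Epartₗ n W = Epart W n := rfl

theorem Epartₗ_rightDualₗ (n : V4) (W : T4) : Epartₗ n (rightDualₗ W) = Bpart W n := by
  rw [← rightDual_eq_rightDualₗ]
  rfl

/-- The bilinear form `W(e_a, n, ·, ·)`, a 2-form when `W` is a double 2-form; it has
`W(e_a, n, ·, n)` as its electric field with respect to `n`. -/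
def insertSnd (W : T4) (n : V4) (a : Fin 4) : T2 := ∑ b, n b • W a b

theorem insertSnd_rightDualₗ (W : T4) (n : V4) (a : Fin 4) :
    insertSnd (rightDualₗ W) n a = hodge (insertSnd W n a) := by
  simp only [insertSnd, map_sum, map_smul, rightDualₗ_apply]

theorem contrRight_insertSnd (W : T4) (n : V4) (a : Fin 4) :
    contrRight (insertSnd W n a) n = Epartₗ n W a := by
  ext c
  simp only [contrRight, insertSnd, Finset.sum_apply, Pi.smul_apply, smul_eq_mul, Finset.sum_mul,
    Epartₗ_apply, Epart, eval4, e4, Pi.single_apply, mul_ite, mul_one, mul_zero, ite_mul, zero_mul,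
    Finset.sum_ite_irrel, Finset.sum_const_zero, Finset.sum_ite_eq', Finset.mem_univ, ↓reduceIte]
  rw [Finset.sum_comm]
  exact Finset.sum_congr rfl fun b _ => Finset.sum_congr rfl fun d _ => by ring

theorem isTwoForm_insertSnd {W : T4} (hW : ∀ a b, IsTwoForm (W a b)) (n : V4) (a : Fin 4) :
    IsTwoForm (insertSnd W n a) := fun c d => by
  simp only [insertSnd, Finset.sum_apply, Pi.smul_apply, hW a _ c d, smul_neg,
    Finset.sum_neg_distrib]

theorem Epartₗ_doubleComp_eq_contr2 (W Z : T4) (n : V4) (a c : Fin 4) :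
    Epartₗ n (doubleComp W Z) a c =
      1 / 2 * contr2 (insertSnd W n a) (insertSnd Z n c) := by
  rw [← contrRight_insertSnd, ← contrBilin_apply]
  simp only [contrRight, insertSnd, doubleComp, map_sum, map_smul, LinearMap.sum_apply,
    LinearMap.smul_apply, contrBilin_apply, Finset.sum_apply, Pi.smul_apply, smul_eq_mul,
    Finset.mul_sum, Finset.sum_mul]
  exact Finset.sum_congr rfl fun b _ => Finset.sum_congr rfl fun d _ => by ring

theorem η_mul_Epartₗ_doubleComp {W Z : T4} (hW : ∀ a b, IsTwoForm (W a b))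
    (hZ : ∀ a b, IsTwoForm (Z a b)) (n : V4) (a c : Fin 4) :
    η n n * Epartₗ n (doubleComp W Z) a c =
      η (Epartₗ n W a) (Epartₗ n Z c)
        - η (Epartₗ n (rightDualₗ W) a) (Epartₗ n (rightDualₗ Z) c) := by
  rw [Epartₗ_doubleComp_eq_contr2,
    (isTwoForm_insertSnd hW n a).η_mul_contr2 (isTwoForm_insertSnd hZ n c)]
  simp only [← insertSnd_rightDualₗ, contrRight_insertSnd]

theorem Epartₗ_Gc (n : V4) (a c : Fin 4) :
    Epartₗ n Gc a c = η n n * ηm a c - η n (e4 a) * η n (e4 c) := by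
  rw [← contrRight_insertSnd]
  fin_cases a <;> fin_cases c <;>
    simp [contrRight, insertSnd, Gc, ηm, η, e4, Fin.sum_univ_four] <;> ring

theorem Epartₗ_volc (n : V4) : Epartₗ n volc = 0 := by
  ext a c
  rw [← contrRight_insertSnd]
  simp only [contrRight, insertSnd, Finset.sum_apply, Pi.smul_apply, volc_eq_vandermonde,
    smul_eq_mul, Fin.sum_univ_four, Pi.zero_apply]
  ring

theorem IsDualSymmetric.eq_zero_of_Epartₗ_eq_zero {W : T4} (hW : IsDualSymmetric W) {n : V4}
    (hn : η n n ≠ 0) (helectric : Epartₗ n W = 0)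
    (hmagnetic : Epartₗ n (rightDualₗ W) = 0) : W = 0 := by
  have hinsert : ∀ a, insertSnd W n a = 0 := fun a =>
    (isTwoForm_insertSnd hW.isTwoForm n a).eq_zero_of_contrRight_eq_zero hn
      (by rw [contrRight_insertSnd, helectric, Pi.zero_apply])
      (by rw [← insertSnd_rightDualₗ, contrRight_insertSnd, hmagnetic, Pi.zero_apply])
  have hcontr : ∀ {Z : T4}, (∀ a b c d, Z a b c d = Z c d a b) →
      ∀ a b, contrRight (Z a b) n = fun c => insertSnd Z n c a b := fun hZ a b => by
    ext c
    simp only [contrRight, insertSnd, Finset.sum_apply, Pi.smul_apply, smul_eq_mul, hZ a b,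
      mul_comm]
  refine funext₂ fun a b => (hW.isTwoForm a b).eq_zero_of_contrRight_eq_zero hn ?_ ?_
  · rw [hcontr hW.pair_symm]
    simp only [hinsert, Pi.zero_apply]
    rfl
  · rw [← rightDualₗ_apply, hcontr (isDualSymmetric_rightDualₗ hW).pair_symm]
    simp only [insertSnd_rightDualₗ, hinsert, map_zero, Pi.zero_apply]
    rfl

section WeylQuadratic

/-- The form `ℛ` of the theorem, with arbitrary coefficients `p`, `q` in place of the invariants
`A`, `𝖡` of `C`. -/
def weylQuadratic (C : T4) (α β p q : ℝ) : T4 :=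
  doubleComp C C + α • C + β • rightDualₗ C - (1 / 3 : ℝ) • (p • Gc - q • volc)

/-- The tensor `𝔞` of the theorem for a vector `n` of arbitrary length and an arbitrary coefficient
`p` in place of `A`. The electric part of `G` is `-h` when `n` is unit timelike. -/
def electricObstruction (C : T4) (n : V4) (α β p : ℝ) : T2 := fun a c =>
  η (Epart C n a) (Epart C n c) - η (Bpart C n a) (Bpart C n c)
    + η n n * (α * Epart C n a c + β * Bpart C n a c - 1 / 3 * p * Epartₗ n Gc a c)

/-- The tensor `𝔟` of the theorem for a vector `n` of arbitrary length and an arbitrary coefficient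
`q` in place of `𝖡`, with `h` encoded as in `electricObstruction`. -/
def magneticObstruction (C : T4) (n : V4) (α β q : ℝ) : T2 := fun a c =>
  η (Bpart C n a) (Epart C n c) + η (Bpart C n c) (Epart C n a)
    + η n n * (α * Bpart C n a c - β * Epart C n a c - 1 / 3 * q * Epartₗ n Gc a c)

variable {C : T4} (hC : IsDualSymmetric C) (n : V4) (α β p q : ℝ)
include hC

theorem isDualSymmetric_weylQuadratic : IsDualSymmetric (weylQuadratic C α β p q) := by
  have hvolc : IsDualSymmetric volc :=
    rightDualₗ_Gc ▸ isDualSymmetric_rightDualₗ isDualSymmetric_Gc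
  exact dualSymmetric.sub_mem
    (dualSymmetric.add_mem (dualSymmetric.add_mem hC.doubleComp_self (dualSymmetric.smul_mem α hC))
      (dualSymmetric.smul_mem β (isDualSymmetric_rightDualₗ hC)))
    (dualSymmetric.smul_mem _ (dualSymmetric.sub_mem
      (dualSymmetric.smul_mem p isDualSymmetric_Gc) (dualSymmetric.smul_mem q hvolc)))

theorem IsDualSymmetric.rightDualₗ_weylQuadratic :
    rightDualₗ (weylQuadratic C α β p q) =
      doubleComp C (rightDualₗ C) + α • rightDualₗ C - β • C
        - (1 / 3 : ℝ) • (p • volc + q • Gc) := by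
  have hvolc : rightDualₗ volc = -Gc := by
    rw [← rightDualₗ_Gc, isDualSymmetric_Gc.rightDualₗ_rightDualₗ]
  simp only [weylQuadratic, map_sub, map_add, map_smul, hC.rightDualₗ_doubleComp,
    hC.rightDualₗ_rightDualₗ, rightDualₗ_Gc, hvolc]
  module

theorem IsDualSymmetric.η_smul_Epartₗ_weylQuadratic :
    η n n • Epartₗ n (weylQuadratic C α β p q) = electricObstruction C n α β p := by
  ext a c
  have hcomp := η_mul_Epartₗ_doubleComp hC.isTwoForm hC.isTwoForm n a c
  simp only [Epartₗ_rightDualₗ] at hcomp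
  simp only [weylQuadratic, electricObstruction, map_sub, map_add, map_smul, Epartₗ_volc,
    Epartₗ_rightDualₗ, Pi.smul_apply, Pi.sub_apply, Pi.add_apply, Pi.zero_apply, smul_eq_mul,
    ← Epartₗ_apply] at hcomp ⊢
  linear_combination hcomp

theorem IsDualSymmetric.η_smul_Epartₗ_rightDualₗ_weylQuadratic :
    η n n • Epartₗ n (rightDualₗ (weylQuadratic C α β p q)) =
      magneticObstruction C n α β q := by
  ext a c
  have hcomp := η_mul_Epartₗ_doubleComp hC.isTwoForm (isDualSymmetric_rightDualₗ hC).isTwoForm n a c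
  rw [hC.rightDualₗ_rightDualₗ, map_neg, Pi.neg_apply, η_neg_right, Epartₗ_rightDualₗ,
    η_comm (Epartₗ n C a)] at hcomp
  simp only [hC.rightDualₗ_weylQuadratic, magneticObstruction, map_sub, map_add, map_smul,
    Epartₗ_volc, Epartₗ_rightDualₗ, Pi.smul_apply, Pi.sub_apply, Pi.add_apply, Pi.zero_apply,
    smul_eq_mul, ← Epartₗ_apply] at hcomp ⊢
  linear_combination hcomp

theorem IsDualSymmetric.weylQuadratic_apply (a b c d : Fin 4) :
    weylQuadratic C α β p q a b c d =
      (1 / 2) * (∑ σ : Fin 4, ∑ τ : Fin 4, ∑ σ' : Fin 4, ∑ τ' : Fin 4,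
        ηm σ σ' * ηm τ τ' * C σ' τ' a b * C σ τ c d)
      + α * C a b c d + β * rightDual C a b c d
      - (1 / 3) * (p * Gc a b c d - q * volc a b c d) := by
  have hcomp : doubleComp C C a b c d = (1 / 2) * (∑ σ : Fin 4, ∑ τ : Fin 4, ∑ σ' : Fin 4,
      ∑ τ' : Fin 4, ηm σ σ' * ηm τ τ' * C σ' τ' a b * C σ τ c d) := by
    rw [doubleComp, contr2_comm, contr2]
    simp only [up2, Finset.mul_sum, hC.pair_symm _ _ a b, hC.pair_symm _ _ c d, mul_comm]
  rw [← hcomp, rightDual_eq_rightDualₗ]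
  rfl

end WeylQuadratic

theorem stmt_0_general {C : T4} (hC : IsDualSymmetric C) {n : V4} (hn : η n n ≠ 0)
    (α β p q : ℝ) :
    weylQuadratic C α β p q = 0 ↔
      electricObstruction C n α β p = 0 ∧ magneticObstruction C n α β q = 0 := by
  rw [← hC.η_smul_Epartₗ_weylQuadratic n α β p q,
    ← hC.η_smul_Epartₗ_rightDualₗ_weylQuadratic n α β p q,
    smul_eq_zero_iff_right hn, smul_eq_zero_iff_right hn]
  exact ⟨fun hzero => by simp only [hzero, map_zero, and_self], fun hparts =>
    (isDualSymmetric_weylQuadratic hC α β p q).eq_zero_of_Epartₗ_eq_zero hn hparts.1 hparts.2⟩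

/-- the 4-linear form ℛ built from a Weyl candidate `C` vanishes identically
iff the spatial symmetric tensors `𝔞` and `𝔟` vanish identically. -/
theorem stmt_0 (C : T4) (hC : IsWeyl C) (n : V4) (hn : η n n = -1) (α β : ℝ)
    (E B : T2) (hE : E = Epart C n) (hB : B = Bpart C n)
    (h : T2) (hh : h = fun a b => ηm a b + η n (e4 a) * η n (e4 b))
    (A Bs : ℝ) (hA : A = contr2 E E - contr2 B B) (hBs : Bs = 2 * contr2 E B)
    (R : T4)
    (hR : R = fun μ ν lam ρ =>
      (1/2) * (∑ σ : Fin 4, ∑ τ : Fin 4, ∑ σ' : Fin 4, ∑ τ' : Fin 4,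
        ηm σ σ' * ηm τ τ' * C σ' τ' μ ν * C σ τ lam ρ)
      + α * C μ ν lam ρ + β * rightDual C μ ν lam ρ
      - (1/3) * (A * Gc μ ν lam ρ - Bs * volc μ ν lam ρ))
    (fa fb : T2)
    (hfa : fa = fun μ ν =>
      -(∑ lam : Fin 4, ∑ lam' : Fin 4, ηm lam lam' * B μ lam' * B ν lam)
      + (∑ lam : Fin 4, ∑ lam' : Fin 4, ηm lam lam' * E μ lam' * E ν lam)
      - (1/3) * A * h μ ν - α * E μ ν - β * B μ ν)
    (hfb : fb = fun μ ν =>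
      (∑ lam : Fin 4, ∑ lam' : Fin 4, ηm lam lam' * B μ lam' * E ν lam)
      + (∑ lam : Fin 4, ∑ lam' : Fin 4, ηm lam lam' * B ν lam' * E μ lam)
      - (1/3) * Bs * h μ ν - α * B μ ν + β * E μ ν) :
    (∀ μ ν lam ρ, R μ ν lam ρ = 0) ↔
      ((∀ μ ν, fa μ ν = 0) ∧ (∀ μ ν, fb μ ν = 0)) := by
  have hC' := hC.isDualSymmetric
  have hR' : R = weylQuadratic C α β A Bs := by
    ext μ ν lam ρ
    rw [hR, hC'.weylQuadratic_apply]
  have hfa' : fa = electricObstruction C n α β A := by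
    ext μ ν
    simp only [hfa, hE, hB, hh, electricObstruction, Epartₗ_Gc, hn, ← η_eq_sum]
    ring
  have hfb' : fb = magneticObstruction C n α β Bs := by
    ext μ ν
    simp only [hfb, hE, hB, hh, magneticObstruction, Epartₗ_Gc, hn, ← η_eq_sum]
    ring
  have hn' : η n n ≠ 0 := by rw [hn]; norm_num
  simpa only [hR', hfa', hfb', funext_iff, Pi.zero_apply] using stmt_0_general hC' hn' α β A Bs
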